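/- The map M_∞ = (M_∞^{(1)},…,M_∞^{(k−1)}) is continuous on T and admits a continuous extension to the closure of T in ℝ^{k−1}. -/

import Mathlib

/-!
The argument runs in terms of the fluxes `p = r^{N-1} ξ'` and `Q = -r^{N-1} ζ'`. By the divergence
form of the equation, `p` is strictly increasing with `p(0) = 0`, and `Q` is strictly decreasing
from `Q(0⁺) = N - 2` to `Q(1) = 0`; both are continuous on `[0,1]`, and the Wronskian identity reads
`p ζ + ξ Q = 1`. With `K(a,s) = p(a) ζ(s) + Q(a) ξ(s)`, the functions `ξ_{[a,b]}` and `ζ_{[a,b]}`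
are nonzero multiples of `K(a,·)` and `K(b,·)` in all four cases of their definition, so `s̄(a,b)`
is the unique zero in `(a,b)` of `Φ(a,b,s) = s^{N-1} ∂ₛ(K(a,s) K(b,s))` (`reflection_iff`).

Since `Φ` is negative at `s = a` and positive at `s = b`, its sign locates `s̄`; as `Φ` is
continuous in `(a,b)`, so is `s̄`, and the bounds `a < s̄(a,b) < b` extend it continuously to the
diagonal (`sExt_cont`).

Finally `M_∞^{(j)} = 1/K(β_j, α_{j+1}) - 1/K(β_j, α_j)`. Each term is continuous on the closed
triangle `0 ≤ a ≤ b ≤ 1`; the only delicate point is the corner `(0,0)`, where `ζ(s̄)` blows up. For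
the first term, `p(β_j) ζ(α_{j+1}) ≤ (pζ)(α_{j+1}) → 0`. For the second, the reflection law itself
yields `p(b) ζ(s̄)(1 - 2ψ) ≤ 2 Q(b) ξ(s̄) ψ` with `ψ = (pζ)(s̄) → 0` (`reflection_bound`).
-/

open Real Set Filter Topology

/-- Context: the two fundamental solutions `ξ`, `ζ` of `ℒu = -u'' - ((N-1)/r) u' + u = 0`
on `(0,1)` together with their basic properties (Proposition 2.1 of the paper). -/
structure GreenData (N : ℕ) where
  xi : ℝ → ℝ
  zeta : ℝ → ℝ
  xi_smooth : ContDiffOn ℝ 2 xi (Set.Icc 0 1)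
  zeta_smooth : ContDiffOn ℝ 2 zeta (Set.Ioc 0 1)
  xi_pos : ∀ r ∈ Set.Icc (0:ℝ) 1, 0 < xi r
  zeta_pos : ∀ r ∈ Set.Ioc (0:ℝ) 1, 0 < zeta r
  xi_ode : ∀ r ∈ Set.Ioo (0:ℝ) 1,
    -(deriv (deriv xi) r) - ((N : ℝ) - 1) / r * deriv xi r + xi r = 0
  zeta_ode : ∀ r ∈ Set.Ioo (0:ℝ) 1,
    -(deriv (deriv zeta) r) - ((N : ℝ) - 1) / r * deriv zeta r + zeta r = 0
  xi_deriv_zero : deriv xi 0 = 0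
  zeta_deriv_one : deriv zeta 1 = 0
  xi_mono : StrictMonoOn xi (Set.Icc 0 1)
  xi_bdd : ∃ M : ℝ, ∀ r ∈ Set.Icc (0:ℝ) 1, xi r ≤ M
  zeta_anti : StrictAntiOn zeta (Set.Ioc 0 1)
  wronskian : ∀ r ∈ Set.Ioc (0:ℝ) 1,
    r ^ (N - 1) * (deriv xi r * zeta r - xi r * deriv zeta r) = 1
  xi_lim : Filter.Tendsto xi (nhdsWithin 0 (Set.Ioi 0)) (nhds (1 / ((N : ℝ) - 2)))
  zeta_lim : Filter.Tendsto (fun r => r ^ (N - 2) * zeta r)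
    (nhdsWithin 0 (Set.Ioi 0)) (nhds 1)
  zeta_deriv_lim : Filter.Tendsto (fun r => r ^ (N - 1) * deriv zeta r)
    (nhdsWithin 0 (Set.Ioi 0)) (nhds (-((N : ℝ) - 2)))

namespace GreenData

variable {N : ℕ}

/-- The function `ξ_{[a,b]}` of the paper. -/
noncomputable def xiI (d : GreenData N) (a b : ℝ) : ℝ → ℝ :=
  if a = 0 then
    (if b = 1 then d.xi else fun r => d.xi r / deriv d.xi b)
  else if b = 1 then
    fun r => deriv d.xi a * d.zeta r - d.xi r * deriv d.zeta a
  else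
    fun r => (deriv d.xi a * d.zeta r - d.xi r * deriv d.zeta a) /
      Real.sqrt (deriv d.xi a * deriv d.zeta b - deriv d.xi b * deriv d.zeta a)

/-- The function `ζ_{[a,b]}` of the paper. -/
noncomputable def zetaI (d : GreenData N) (a b : ℝ) : ℝ → ℝ :=
  if a = 0 then
    (if b = 1 then d.zeta
     else fun r => deriv d.xi b * d.zeta r - d.xi r * deriv d.zeta b)
  else if b = 1 then
    fun r => -(d.zeta r / deriv d.zeta a)
  else
    fun r => (deriv d.xi b * d.zeta r - d.xi r * deriv d.zeta b) /
      Real.sqrt (deriv d.xi a * deriv d.zeta b - deriv d.xi b * deriv d.zeta a)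

/-- The reflection law `ξ'_{[a,b]}(s)/ξ_{[a,b]}(s) + ζ'_{[a,b]}(s)/ζ_{[a,b]}(s) = 0`. -/
def ReflectionAt (d : GreenData N) (a b s : ℝ) : Prop :=
  deriv (d.xiI a b) s / d.xiI a b s + deriv (d.zetaI a b) s / d.zetaI a b s = 0

/-- The Green function `G_{[a,b]}(r,s)`. -/
noncomputable def G (d : GreenData N) (a b r s : ℝ) : ℝ :=
  if r ≤ s then s ^ (N - 1) * d.xiI a b r * d.zetaI a b s
  else s ^ (N - 1) * d.xiI a b s * d.zetaI a b r

end GreenData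

/-- `sbar` is the function associating to `0 ≤ a < b ≤ 1` the unique point
`s̄(a,b) ∈ (a,b)` satisfying the reflection law. -/
def IsSBar {N : ℕ} (d : GreenData N) (sbar : ℝ → ℝ → ℝ) : Prop :=
  ∀ a b : ℝ, 0 ≤ a → a < b → b ≤ 1 →
    sbar a b ∈ Set.Ioo a b ∧ d.ReflectionAt a b (sbar a b) ∧
    ∀ s ∈ Set.Ioo a b, d.ReflectionAt a b s → s = sbar a b

/-- The map `M_∞^{(j)}` of the paper, with `α_j = s̄(β_{j-1},β_j)`. -/
noncomputable def Minf {N : ℕ} (d : GreenData N) (sbar : ℝ → ℝ → ℝ)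
    (β : ℕ → ℝ) (j : ℕ) : ℝ :=
  (1 / (β j) ^ (N - 1)) *
    (1 / (deriv d.xi (β j) * d.zeta (sbar (β j) (β (j + 1))) -
            d.xi (sbar (β j) (β (j + 1))) * deriv d.zeta (β j)) -
     1 / (deriv d.xi (β j) * d.zeta (sbar (β (j - 1)) (β j)) -
            d.xi (sbar (β (j - 1)) (β j)) * deriv d.zeta (β j)))

/-- Extension of a `(k-1)`-tuple `(β₁,…,β_{k-1})` by the conventions `β₀ = 0`, `β_k = 1`. -/
noncomputable def extendB (k : ℕ) (β : Fin (k - 1) → ℝ) : ℕ → ℝ := fun j =>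
  if hj : 1 ≤ j ∧ j ≤ k - 1 then β ⟨j - 1, by omega⟩
  else if j = 0 then 0 else 1

/-- The open simplex `T = {0 = β₀ < β₁ < ⋯ < β_{k-1} < β_k = 1}` as a subset of `ℝ^{k-1}`. -/
def TSet (k : ℕ) : Set (Fin (k - 1) → ℝ) :=
  {β | ∀ j < k, extendB k β j < extendB k β (j + 1)}


namespace GreenData

/-! ### The flux functions `p` and `Q` -/

/-- The flux `p(r) = r^{N-1} ξ'(r)`. -/
noncomputable def pF {N : ℕ} (d : GreenData N) (r : ℝ) : ℝ := r ^ (N - 1) * deriv d.xi r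

/-- The flux `Q(r) = -r^{N-1} ζ'(r)`, with its limit `N - 2` as the value at `r = 0`. -/
noncomputable def qF {N : ℕ} (d : GreenData N) (r : ℝ) : ℝ :=
  if r = 0 then (N : ℝ) - 2 else -(r ^ (N - 1) * deriv d.zeta r)

/-- `K(a, s) = p(a) ζ(s) + Q(a) ξ(s)`: up to a nonzero factor depending only on `a`, this is the
solution of `ℒu = 0` with vanishing derivative at `a`. At `a = 0` it is `(N-2) ξ(s)`. -/
noncomputable def kF {N : ℕ} (d : GreenData N) (a s : ℝ) : ℝ :=
  d.pF a * d.zeta s + d.qF a * d.xi s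

/-- `Φ(a, b, s) = s^{N-1} ∂ₛ (K(a, s) K(b, s))`, expanded by means of the Wronskian identity. In
this form it is continuous on `[a, b]` even for `a = 0`, where the singular term has factor
`p(0) = 0`. -/
noncomputable def phi {N : ℕ} (d : GreenData N) (a b s : ℝ) : ℝ :=
  -2 * d.pF a * d.pF b * d.zeta s * d.qF s
    + (d.pF b * d.qF a + d.pF a * d.qF b) * (1 - 2 * (d.xi s * d.qF s))
    + 2 * d.qF a * d.qF b * d.xi s * d.pF s

variable {N : ℕ} (d : GreenData N)

lemma xi_cont : ContinuousOn d.xi (Icc 0 1) := d.xi_smooth.continuousOn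

lemma zeta_cont : ContinuousOn d.zeta (Ioc 0 1) := d.zeta_smooth.continuousOn

lemma xi_diff {r : ℝ} (hr : r ∈ Ioo (0:ℝ) 1) : DifferentiableAt ℝ d.xi r :=
  (d.xi_smooth.contDiffAt (Icc_mem_nhds hr.1 hr.2)).differentiableAt (by norm_num)

lemma zeta_diff {r : ℝ} (hr : r ∈ Ioo (0:ℝ) 1) : DifferentiableAt ℝ d.zeta r :=
  (d.zeta_smooth.contDiffAt (Ioc_mem_nhds hr.1 hr.2)).differentiableAt (by norm_num)

lemma pF_zero : d.pF 0 = 0 := by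
  simp [pF, d.xi_deriv_zero]

lemma qF_zero : d.qF 0 = (N : ℝ) - 2 := by simp [qF]

lemma qF_one : d.qF 1 = 0 := by simp [qF, d.zeta_deriv_one]

lemma qF_of_ne {r : ℝ} (hr : r ≠ 0) : d.qF r = -(r ^ (N - 1) * deriv d.zeta r) := by
  simp [qF, hr]

lemma wron {r : ℝ} (hr : r ∈ Ioc (0:ℝ) 1) : d.pF r * d.zeta r + d.xi r * d.qF r = 1 := by
  rw [d.qF_of_ne hr.1.ne', pF, ← d.wronskian r hr]; ring

lemma xi_zero : d.xi 0 = 1 / ((N : ℝ) - 2) := by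
  have h1 : Tendsto d.xi (𝓝[>] 0) (𝓝 (d.xi 0)) := by
    have h := d.xi_cont 0 (by simp)
    have := h.mono Ioc_subset_Icc_self
    rwa [ContinuousWithinAt, nhdsWithin_Ioc_eq_nhdsGT zero_lt_one] at this
  exact tendsto_nhds_unique h1 d.xi_lim

lemma n_pos (hN : 3 ≤ N) : (0:ℝ) < (N : ℝ) - 2 := by
  have : (3:ℝ) ≤ N := by exact_mod_cast hN
  linarith

lemma xi_q_zero (hN : 3 ≤ N) : d.xi 0 * d.qF 0 = 1 := by
  rw [d.xi_zero, d.qF_zero]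
  have := n_pos hN
  field_simp

/-- At `r = 1` the two-sided derivative of `ξ` agrees with the one-sided one because the Wronskian
identity forces `ξ'(1) ≠ 0`, so that `ξ` is differentiable there; at `r = 0` the factor `r^{N-1}`
vanishes. -/
lemma pF_cont (hN : 3 ≤ N) : ContinuousOn d.pF (Icc 0 1) := by
  have h : ContinuousOn (fun r => r ^ (N - 1) * derivWithin d.xi (Icc 0 1) r) (Icc 0 1) :=
    (continuous_pow _).continuousOn.mul
      (d.xi_smooth.continuousOn_derivWithin (uniqueDiffOn_Icc zero_lt_one) (by norm_num))
  refine h.congr ?_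
  intro r hr
  rcases hr.1.eq_or_lt with h0 | h0
  · subst h0
    have : N - 1 ≠ 0 := by omega
    simp [pF, this]
  · change r ^ (N - 1) * deriv d.xi r = r ^ (N - 1) * derivWithin d.xi (Icc 0 1) r
    rw [DifferentiableAt.derivWithin _ (uniqueDiffOn_Icc zero_lt_one r hr)]
    rcases hr.2.eq_or_lt with h1 | h1
    · subst h1
      apply differentiableAt_of_deriv_ne_zero
      intro h
      have := d.wronskian 1 (by simp)
      simp [h, d.zeta_deriv_one] at this
    · exact d.xi_diff ⟨h0, h1⟩

/-- On `(0, 1]` continuity comes from `Q = (1 - p ζ) / ξ`. -/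
lemma qF_cont (hN : 3 ≤ N) : ContinuousOn d.qF (Icc 0 1) := by
  intro r hr
  rcases hr.1.eq_or_lt with h0 | h0
  · subst h0
    have h1 : Tendsto d.qF (𝓝[>] 0) (𝓝 (d.qF 0)) := by
      have := d.zeta_deriv_lim.neg
      rw [neg_neg, ← d.qF_zero] at this
      refine this.congr' ?_
      filter_upwards [self_mem_nhdsWithin] with x hx
      rw [d.qF_of_ne (ne_of_gt hx)]
    have h2 : ContinuousWithinAt d.qF (Ioi 0) 0 := h1
    have h3 := (continuousWithinAt_insert_self (x := (0:ℝ))).mpr h2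
    refine h3.mono ?_
    intro x hx
    rcases hx.1.eq_or_lt with h | h
    · left; exact h.symm
    · right; exact h
  · have h1 : ContinuousOn (fun r => (1 - d.pF r * d.zeta r) / d.xi r) (Ioc 0 1) := by
      refine ContinuousOn.div ?_ (d.xi_cont.mono Ioc_subset_Icc_self) ?_
      · exact continuousOn_const.sub
          (((d.pF_cont hN).mono Ioc_subset_Icc_self).mul d.zeta_cont)
      · intro x hx; exact (d.xi_pos x (Ioc_subset_Icc_self hx)).ne'
    have h2 : ContinuousOn d.qF (Ioc 0 1) := by
      refine h1.congr ?_
      intro x hx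
      have h3 := d.wron hx
      have h4 := d.xi_pos x (Ioc_subset_Icc_self hx)
      rw [eq_div_iff h4.ne']; linarith
    refine (h2 r ⟨h0, hr.2⟩).mono_of_mem_nhdsWithin ?_
    have : Ioi (0:ℝ) ∩ Icc 0 1 ⊆ Ioc 0 1 := fun x hx => ⟨hx.1, hx.2.2⟩
    exact mem_of_superset
      (inter_mem (mem_nhdsWithin_of_mem_nhds (Ioi_mem_nhds h0)) self_mem_nhdsWithin) this

/-- The equation `ℒu = 0` in divergence form: `(r^{N-1} u')' = r^{N-1} u`. -/
lemma deriv_flux (hN : 3 ≤ N) {u : ℝ → ℝ} {r : ℝ} (hr : r ∈ Ioo (0:ℝ) 1)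
    (hu : ContDiffOn ℝ 2 u (Ioo 0 1))
    (ode : -(deriv (deriv u) r) - ((N : ℝ) - 1) / r * deriv u r + u r = 0) :
    HasDerivAt (fun r => r ^ (N - 1) * deriv u r) (r ^ (N - 1) * u r) r := by
  have hd : DifferentiableAt ℝ (deriv u) r := by
    have h1 := ((contDiffOn_succ_iff_deriv_of_isOpen (n := 1) isOpen_Ioo).mp
      (by simpa [one_add_one_eq_two] using hu)).2.2
    exact (h1.contDiffAt (isOpen_Ioo.mem_nhds hr)).differentiableAt (by norm_num)
  have h2 := (hasDerivAt_pow (N - 1) r).mul hd.hasDerivAt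
  refine h2.congr_deriv ?_
  have h3 : deriv (deriv u) r = u r - ((N : ℝ) - 1) / r * deriv u r := by linarith
  obtain ⟨n, rfl⟩ : ∃ n, N = n + 2 := ⟨N - 2, by omega⟩
  have h0 : r ≠ 0 := hr.1.ne'
  simp only [h3, show n + 2 - 1 = n + 1 by omega, Nat.add_sub_cancel]
  push_cast
  field_simp
  ring

lemma pF_mono (hN : 3 ≤ N) : StrictMonoOn d.pF (Icc 0 1) := by
  refine strictMonoOn_of_deriv_pos (convex_Icc 0 1) (d.pF_cont hN) ?_
  intro r hr
  rw [interior_Icc] at hr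
  have := deriv_flux hN hr (d.xi_smooth.mono Ioo_subset_Icc_self) (d.xi_ode r hr)
  have h2 : deriv d.pF r = r ^ (N - 1) * d.xi r := this.deriv
  rw [h2]
  exact mul_pos (pow_pos hr.1 _) (d.xi_pos r (Ioo_subset_Icc_self hr))

lemma qF_anti (hN : 3 ≤ N) : StrictAntiOn d.qF (Icc 0 1) := by
  refine strictAntiOn_of_deriv_neg (convex_Icc 0 1) (d.qF_cont hN) ?_
  intro r hr
  rw [interior_Icc] at hr
  have := (deriv_flux hN hr (d.zeta_smooth.mono Ioo_subset_Ioc_self) (d.zeta_ode r hr)).neg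
  have h2 : HasDerivAt d.qF (-(r ^ (N - 1) * d.zeta r)) r := by
    refine this.congr_of_eventuallyEq ?_
    filter_upwards [isOpen_Ioo.mem_nhds hr] with x hx
    rw [d.qF_of_ne hx.1.ne']; rfl
  rw [h2.deriv]
  exact neg_neg_of_pos (mul_pos (pow_pos hr.1 _) (d.zeta_pos r (Ioo_subset_Ioc_self hr)))

lemma pF_pos (hN : 3 ≤ N) {r : ℝ} (hr : r ∈ Ioc (0:ℝ) 1) : 0 < d.pF r := by
  have := d.pF_mono hN (by simp) (Ioc_subset_Icc_self hr) hr.1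
  rwa [d.pF_zero] at this

lemma pF_nonneg (hN : 3 ≤ N) {r : ℝ} (hr : r ∈ Icc (0:ℝ) 1) : 0 ≤ d.pF r := by
  have := (d.pF_mono hN).monotoneOn (by simp) hr hr.1
  rwa [d.pF_zero] at this

lemma qF_pos (hN : 3 ≤ N) {r : ℝ} (hr : r ∈ Ico (0:ℝ) 1) : 0 < d.qF r := by
  have := d.qF_anti hN (Ico_subset_Icc_self hr) (by simp) hr.2
  rwa [d.qF_one] at this

lemma qF_nonneg (hN : 3 ≤ N) {r : ℝ} (hr : r ∈ Icc (0:ℝ) 1) : 0 ≤ d.qF r := by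
  have := (d.qF_anti hN).antitoneOn hr (by simp) hr.2
  rwa [d.qF_one] at this

lemma kF_pos (hN : 3 ≤ N) {a s : ℝ} (ha : a ∈ Icc (0:ℝ) 1) (hs : s ∈ Icc (0:ℝ) 1)
    (h : s = 0 → a = 0) : 0 < d.kF a s := by
  rw [kF]
  rcases hs.1.eq_or_lt with h0 | h0
  · have ha0 := h h0.symm
    subst ha0
    rw [d.pF_zero, zero_mul, zero_add]
    exact mul_pos (d.qF_pos hN (by simp)) (d.xi_pos s hs)
  · have hz := d.zeta_pos s ⟨h0, hs.2⟩
    have hx := d.xi_pos s hs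
    rcases ha.2.eq_or_lt with h1 | h1
    · subst h1
      rw [d.qF_one, zero_mul, add_zero]
      exact mul_pos (d.pF_pos hN (by simp)) hz
    · have := mul_pos (d.qF_pos hN ⟨ha.1, h1⟩) hx
      have := mul_nonneg (d.pF_nonneg hN ha) hz.le
      linarith

/-! ### The reflection law -/

lemma phi_eq {a b s : ℝ} (hs : s ∈ Ioc (0:ℝ) 1) :
    d.phi a b s = d.kF b s * (d.pF s * d.qF a - d.pF a * d.qF s)
      + d.kF a s * (d.pF s * d.qF b - d.pF b * d.qF s) := by
  have h := d.wron hs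
  have h1 : d.pF s * d.zeta s = 1 - d.xi s * d.qF s := by linarith
  simp only [phi, kF]
  linear_combination (-(d.pF b * d.qF a + d.pF a * d.qF b)) * h1

lemma kF_hasDeriv {a s : ℝ} (hs : s ∈ Ioo (0:ℝ) 1) :
    HasDerivAt (d.kF a) ((d.pF s * d.qF a - d.pF a * d.qF s) / s ^ (N - 1)) s := by
  have h := ((d.zeta_diff hs).hasDerivAt.const_mul (d.pF a)).add
    ((d.xi_diff hs).hasDerivAt.const_mul (d.qF a))
  refine (h.congr_deriv ?_)
  have h0 : s ≠ 0 := hs.1.ne'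
  rw [d.qF_of_ne h0, pF]
  field_simp
  rw [pF]
  ring

lemma sqrt_pos_aux (hN : 3 ≤ N) {a b : ℝ} (ha : 0 < a) (hab : a < b) (hb : b ≤ 1) :
    0 < Real.sqrt (deriv d.xi a * deriv d.zeta b - deriv d.xi b * deriv d.zeta a) := by
  apply Real.sqrt_pos.mpr
  have hb0 := ha.trans hab
  have haI : a ∈ Ioc (0:ℝ) 1 := ⟨ha, hab.le.trans hb⟩
  have hbI : b ∈ Ioc (0:ℝ) 1 := ⟨hb0, hb⟩
  have hp := d.pF_mono hN (Ioc_subset_Icc_self haI) (Ioc_subset_Icc_self hbI) hab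
  have hq := d.qF_anti hN (Ioc_subset_Icc_self haI) (Ioc_subset_Icc_self hbI) hab
  have hL : 0 < d.pF b * d.qF a - d.pF a * d.qF b := by
    nlinarith [d.pF_pos hN haI, d.qF_nonneg hN (Ioc_subset_Icc_self hbI)]
  rw [d.qF_of_ne ha.ne', d.qF_of_ne hb0.ne', pF, pF] at hL
  have h1 : 0 < a ^ (N - 1) * b ^ (N - 1) := by positivity
  refine pos_of_mul_pos_right (a := a ^ (N - 1) * b ^ (N - 1)) ?_ h1.le
  linarith

lemma xiI_eq (hN : 3 ≤ N) {a b : ℝ} (ha : 0 ≤ a) (hab : a < b) (hb : b ≤ 1) :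
    ∃ c : ℝ, c ≠ 0 ∧ d.xiI a b = fun r => c * d.kF a r := by
  have hn := n_pos hN
  have hb0 : 0 < b := ha.trans_lt hab
  have hpb : b ^ (N - 1) * deriv d.xi b ≠ 0 := (d.pF_pos hN ⟨hb0, hb⟩).ne'
  have hxb : deriv d.xi b ≠ 0 := right_ne_zero_of_mul hpb
  rcases ha.eq_or_lt with h0 | h0
  · subst h0
    by_cases h1 : b = 1
    · refine ⟨1 / ((N:ℝ) - 2), by positivity, ?_⟩
      funext r
      simp only [xiI, h1, if_true, kF, d.pF_zero, d.qF_zero]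
      field_simp
      ring
    · refine ⟨1 / ((N:ℝ) - 2) / deriv d.xi b, by positivity, ?_⟩
      funext r
      simp only [xiI, h1, if_true, if_false, kF, d.pF_zero, d.qF_zero]
      field_simp
      ring
  · have key : ∀ r, d.kF a r = a ^ (N - 1) *
        (deriv d.xi a * d.zeta r - d.xi r * deriv d.zeta a) := by
      intro r; rw [kF, d.qF_of_ne h0.ne', pF]; ring
    by_cases h1 : b = 1
    · refine ⟨1 / a ^ (N - 1), by positivity, ?_⟩
      funext r
      simp only [xiI, h1, h0.ne', if_true, if_false, key]
      field_simp
    · refine ⟨1 / a ^ (N - 1) / Real.sqrt (deriv d.xi a * deriv d.zeta b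
        - deriv d.xi b * deriv d.zeta a), ?_, ?_⟩
      · have := d.sqrt_pos_aux hN h0 hab hb
        positivity
      · funext r
        simp only [xiI, h1, h0.ne', if_false, key]
        field_simp

lemma zetaI_eq (hN : 3 ≤ N) {a b : ℝ} (ha : 0 ≤ a) (hab : a < b) (hb : b ≤ 1) :
    ∃ c : ℝ, c ≠ 0 ∧ d.zetaI a b = fun r => c * d.kF b r := by
  have hb0 : 0 < b := ha.trans_lt hab
  have key : ∀ r, d.kF b r = b ^ (N - 1) *
      (deriv d.xi b * d.zeta r - d.xi r * deriv d.zeta b) := by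
    intro r; rw [kF, d.qF_of_ne hb0.ne', pF]; ring
  have hp1 := d.pF_pos hN (r := 1) (by simp)
  have key1 : ∀ r, d.kF 1 r = d.pF 1 * d.zeta r := by
    intro r; rw [kF, d.qF_one]; ring
  rcases ha.eq_or_lt with h0 | h0
  · subst h0
    by_cases h1 : b = 1
    · refine ⟨1 / d.pF 1, by positivity, ?_⟩
      funext r
      simp only [zetaI, h1, if_true, key1]
      field_simp
    · refine ⟨1 / b ^ (N - 1), by positivity, ?_⟩
      funext r
      simp only [zetaI, h1, if_true, if_false, key]
      field_simp
  · by_cases h1 : b = 1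
    · have hq : 0 < -(a ^ (N - 1) * deriv d.zeta a) := by
        rw [← d.qF_of_ne h0.ne']; exact d.qF_pos hN ⟨ha, hab.trans_le hb⟩
      have hz : deriv d.zeta a ≠ 0 := right_ne_zero_of_mul (neg_ne_zero.mp hq.ne')
      subst h1
      refine ⟨-(1 / d.pF 1 / deriv d.zeta a), ?_, ?_⟩
      · exact neg_ne_zero.mpr (by positivity)
      funext r
      simp only [zetaI, h0.ne', if_true, if_false, key1]
      field_simp
    · refine ⟨1 / b ^ (N - 1) / Real.sqrt (deriv d.xi a * deriv d.zeta b
        - deriv d.xi b * deriv d.zeta a), ?_, ?_⟩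
      · have := d.sqrt_pos_aux hN h0 hab hb
        positivity
      · funext r
        simp only [zetaI, h1, h0.ne', if_false, key]
        field_simp

lemma reflection_iff (hN : 3 ≤ N) {a b s : ℝ} (ha : 0 ≤ a) (hb : b ≤ 1) (hs : s ∈ Ioo a b) :
    d.ReflectionAt a b s ↔ d.phi a b s = 0 := by
  have hab := hs.1.trans hs.2
  obtain ⟨c, hc, h1⟩ := d.xiI_eq hN ha hab hb
  obtain ⟨c', hc', h2⟩ := d.zetaI_eq hN ha hab hb
  have hs0 : s ∈ Ioo (0:ℝ) 1 := ⟨ha.trans_lt hs.1, hs.2.trans_le hb⟩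
  have hsI := Ioo_subset_Icc_self hs0
  have hka := d.kF_pos hN (a := a) ⟨ha, (hab.trans_le hb).le⟩ hsI
    (fun h => absurd h hs0.1.ne')
  have hkb := d.kF_pos hN (a := b) ⟨(ha.trans_lt hab).le, hb⟩ hsI
    (fun h => absurd h hs0.1.ne')
  have hsn : 0 < s ^ (N - 1) := pow_pos hs0.1 _
  rw [ReflectionAt, h1, h2, ((d.kF_hasDeriv (a := a) hs0).const_mul c).deriv,
    ((d.kF_hasDeriv (a := b) hs0).const_mul c').deriv, d.phi_eq (Ioo_subset_Ioc_self hs0)]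
  have e : c * ((d.pF s * d.qF a - d.pF a * d.qF s) / s ^ (N - 1)) / (c * d.kF a s)
      + c' * ((d.pF s * d.qF b - d.pF b * d.qF s) / s ^ (N - 1)) / (c' * d.kF b s)
      = (d.kF b s * (d.pF s * d.qF a - d.pF a * d.qF s)
      + d.kF a s * (d.pF s * d.qF b - d.pF b * d.qF s)) /
        (s ^ (N - 1) * d.kF a s * d.kF b s) := by
    field_simp
  rw [e, div_eq_zero_iff]
  have : s ^ (N - 1) * d.kF a s * d.kF b s ≠ 0 := by positivity
  simp [this]

lemma phi_cont (hN : 3 ≤ N) {a b : ℝ} (ha : 0 ≤ a) (hb : b ≤ 1) :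
    ContinuousOn (d.phi a b) (Icc a b) := by
  have hsub : Icc a b ⊆ Icc 0 1 := Icc_subset_Icc ha hb
  have hp := (d.pF_cont hN).mono hsub
  have hq := (d.qF_cont hN).mono hsub
  have hx := d.xi_cont.mono hsub
  have h1 : ContinuousOn (fun s => -2 * d.pF a * d.pF b * d.zeta s * d.qF s) (Icc a b) := by
    rcases ha.eq_or_lt with h0 | h0
    · subst h0
      simp only [d.pF_zero, mul_zero, zero_mul]
      exact continuousOn_const
    · have hz := d.zeta_cont.mono (fun x (hx : x ∈ Icc a b) =>
        (⟨h0.trans_le hx.1, hx.2.trans hb⟩ : x ∈ Ioc (0:ℝ) 1))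
      exact (continuousOn_const.mul hz).mul hq
  unfold phi
  exact (h1.add (continuousOn_const.mul (continuousOn_const.sub
    (continuousOn_const.mul (hx.mul hq))))).add ((continuousOn_const.mul hx).mul hp)

lemma phi_left (hN : 3 ≤ N) {a b : ℝ} (ha : 0 ≤ a) (hab : a < b) (hb : b ≤ 1) :
    d.phi a b a < 0 := by
  have hbI : b ∈ Ioc (0:ℝ) 1 := ⟨ha.trans_lt hab, hb⟩
  have hpb := d.pF_pos hN hbI
  rcases ha.eq_or_lt with h0 | h0
  · subst h0
    have := d.xi_q_zero hN
    have hq := d.qF_pos hN (r := 0) (by simp)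
    simp only [phi, d.pF_zero, this]
    nlinarith [mul_pos hpb hq]
  · have haI : a ∈ Ioc (0:ℝ) 1 := ⟨h0, hab.le.trans hb⟩
    rw [d.phi_eq haI]
    have hk := d.kF_pos hN (Ioc_subset_Icc_self haI) (Ioc_subset_Icc_self haI) id
    have hp := d.pF_mono hN (Ioc_subset_Icc_self haI) (Ioc_subset_Icc_self hbI) hab
    have hq := d.qF_anti hN (Ioc_subset_Icc_self haI) (Ioc_subset_Icc_self hbI) hab
    have hL : d.pF a * d.qF b - d.pF b * d.qF a < 0 := by
      nlinarith [d.pF_pos hN haI, d.qF_nonneg hN (Ioc_subset_Icc_self hbI)]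
    nlinarith [mul_neg_of_pos_of_neg hk hL]

lemma phi_right (hN : 3 ≤ N) {a b : ℝ} (ha : 0 ≤ a) (hab : a < b) (hb : b ≤ 1) :
    0 < d.phi a b b := by
  have hbI : b ∈ Ioc (0:ℝ) 1 := ⟨ha.trans_lt hab, hb⟩
  have hbC := Ioc_subset_Icc_self hbI
  have haC : a ∈ Icc (0:ℝ) 1 := ⟨ha, hab.le.trans hb⟩
  have hpb := d.pF_pos hN hbI
  rw [d.phi_eq hbI]
  have hk := d.kF_pos hN hbC hbC id
  have hp := d.pF_mono hN haC hbC hab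
  have hq := d.qF_anti hN haC hbC hab
  have hL : 0 < d.pF b * d.qF a - d.pF a * d.qF b := by
    nlinarith [d.pF_nonneg hN haC, d.qF_nonneg hN hbC]
  nlinarith [mul_pos hk hL]

/-! ### Continuity of the reflection point -/

/-- The closed triangle `0 ≤ a ≤ b ≤ 1`. -/
def tri : Set (ℝ × ℝ) := {x | 0 ≤ x.1 ∧ x.1 ≤ x.2 ∧ x.2 ≤ 1}

/-- The extension of `s̄` to the closed triangle by `s̄(a, a) = a`. -/
noncomputable def sExt (sbar : ℝ → ℝ → ℝ) (x : ℝ × ℝ) : ℝ :=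
  if x.1 < x.2 then sbar x.1 x.2 else x.1

variable {sbar : ℝ → ℝ → ℝ}

lemma phi_neg_of_lt (hN : 3 ≤ N) (hsbar : IsSBar d sbar) {a b s : ℝ} (ha : 0 ≤ a) (hab : a < b)
    (hb : b ≤ 1) (h1 : a < s) (h2 : s < sbar a b) : d.phi a b s < 0 := by
  obtain ⟨hm, _, hu⟩ := hsbar a b ha hab hb
  by_contra! h
  have hsb : s < b := h2.trans hm.2
  -- a zero in `(a, s]` would be a second reflection point
  obtain ⟨t, ht, ht0⟩ := intermediate_value_Icc h1.le
    ((d.phi_cont hN ha hb).mono (Icc_subset_Icc_right hsb.le))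
    (show (0:ℝ) ∈ Icc _ _ from ⟨(d.phi_left hN ha hab hb).le, h⟩)
  have hat : a < t := by
    rcases ht.1.eq_or_lt with e | e
    · subst e; exact absurd ht0 (d.phi_left hN ha hab hb).ne
    · exact e
  have htI : t ∈ Ioo a b := ⟨hat, ht.2.trans_lt hsb⟩
  have := hu t htI ((d.reflection_iff hN ha hb htI).mpr ht0)
  linarith [ht.2]

lemma phi_pos_of_gt (hN : 3 ≤ N) (hsbar : IsSBar d sbar) {a b s : ℝ} (ha : 0 ≤ a) (hab : a < b)
    (hb : b ≤ 1) (h1 : s < b) (h2 : sbar a b < s) : 0 < d.phi a b s := by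
  obtain ⟨hm, _, hu⟩ := hsbar a b ha hab hb
  by_contra! h
  have hsb : a < s := hm.1.trans h2
  obtain ⟨t, ht, ht0⟩ := intermediate_value_Icc h1.le
    ((d.phi_cont hN ha hb).mono (Icc_subset_Icc_left hsb.le))
    (show (0:ℝ) ∈ Icc _ _ from ⟨h, (d.phi_right hN ha hab hb).le⟩)
  have hat : t < b := by
    rcases ht.2.eq_or_lt with e | e
    · subst e; exact absurd ht0 (d.phi_right hN ha hab hb).ne'
    · exact e
  have htI : t ∈ Ioo a b := ⟨hsb.trans_le ht.1, hat⟩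
  have := hu t htI ((d.reflection_iff hN ha hb htI).mpr ht0)
  linarith [ht.1]

lemma phi_sbar (hN : 3 ≤ N) (hsbar : IsSBar d sbar) {a b : ℝ} (ha : 0 ≤ a) (hab : a < b)
    (hb : b ≤ 1) : d.phi a b (sbar a b) = 0 := by
  obtain ⟨hm, hr, _⟩ := hsbar a b ha hab hb
  exact (d.reflection_iff hN ha hb hm).mp hr

lemma sExt_mem (hsbar : IsSBar d sbar) {x : ℝ × ℝ} (hx : x ∈ tri) :
    x.1 ≤ sExt sbar x ∧ sExt sbar x ≤ x.2 := by
  rw [sExt]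
  split_ifs with h
  · have := (hsbar x.1 x.2 hx.1 h hx.2.2).1
    exact ⟨this.1.le, this.2.le⟩
  · exact ⟨le_rfl, hx.2.1⟩

lemma sExt_eq_zero (hsbar : IsSBar d sbar) {x : ℝ × ℝ} (hx : x ∈ tri) (h : sExt sbar x = 0) :
    x = (0, 0) := by
  rw [sExt] at h
  split_ifs at h with h1
  · have := (hsbar x.1 x.2 hx.1 h1 hx.2.2).1
    linarith [this.1, hx.1]
  · have h2 := hx.2.1
    ext
    · exact h
    · simp only; linarith

lemma comp_fst {f : ℝ → ℝ} (hf : ContinuousOn f (Icc 0 1)) :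
    ContinuousOn (fun x : ℝ × ℝ => f x.1) tri :=
  hf.comp continuousOn_fst (fun _ hx => ⟨hx.1, hx.2.1.trans hx.2.2⟩)

lemma comp_snd {f : ℝ → ℝ} (hf : ContinuousOn f (Icc 0 1)) :
    ContinuousOn (fun x : ℝ × ℝ => f x.2) tri :=
  hf.comp continuousOn_snd (fun _ hx => ⟨hx.1.trans hx.2.1, hx.2.2⟩)

lemma phi_cont_ab (hN : 3 ≤ N) (s : ℝ) :
    ContinuousOn (fun x : ℝ × ℝ => d.phi x.1 x.2 s) tri := by
  have p1 := comp_fst (d.pF_cont hN)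
  have p2 := comp_snd (d.pF_cont hN)
  have q1 := comp_fst (d.qF_cont hN)
  have q2 := comp_snd (d.qF_cont hN)
  unfold phi
  fun_prop

/-- Off the diagonal, the sign of `Φ` locates `s̄` and is stable under perturbation of `(a, b)`;
on the diagonal, `a ≤ s̄(a, b) ≤ b`. -/
lemma sExt_cont (hN : 3 ≤ N) (hsbar : IsSBar d sbar) : ContinuousOn (sExt sbar) tri := by
  intro x hx
  have hf : Tendsto (fun y : ℝ × ℝ => y.1) (𝓝[tri] x) (𝓝 x.1) := continuous_fst.continuousWithinAt
  have hs : Tendsto (fun y : ℝ × ℝ => y.2) (𝓝[tri] x) (𝓝 x.2) := continuous_snd.continuousWithinAt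
  have hmem : ∀ᶠ y in 𝓝[tri] x, y ∈ tri := self_mem_nhdsWithin
  rcases hx.2.1.eq_or_lt with h | h
  · have e : sExt sbar x = x.1 := by simp [sExt, h]
    rw [ContinuousWithinAt, e]
    rw [← h] at hs
    refine tendsto_of_tendsto_of_tendsto_of_le_of_le' hf hs ?_ ?_
    · filter_upwards [hmem] with y hy using (d.sExt_mem hsbar hy).1
    · filter_upwards [hmem] with y hy using (d.sExt_mem hsbar hy).2
  · have e : sExt sbar x = sbar x.1 x.2 := by simp [sExt, h]
    have hm := (hsbar x.1 x.2 hx.1 h hx.2.2).1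
    rw [ContinuousWithinAt, e]
    refine tendsto_order.mpr ⟨fun l hl => ?_, fun l hl => ?_⟩
    · obtain ⟨t, ht1, ht2⟩ := exists_between (max_lt hl hm.1)
      have hta := (le_max_right _ _).trans_lt ht1
      have htb := ht2.trans hm.2
      have hneg := d.phi_neg_of_lt hN hsbar hx.1 h hx.2.2 hta ht2
      have hc := (d.phi_cont_ab hN t x hx).eventually (gt_mem_nhds hneg)
      filter_upwards [hmem, hc, hf.eventually (gt_mem_nhds hta), hs.eventually (lt_mem_nhds htb)]
        with y hy hyc hy1 hy2
      have hyy : y.1 < y.2 := hy1.trans hy2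
      have e : sExt sbar y = sbar y.1 y.2 := by simp [sExt, hyy]
      rw [e]
      refine ((le_max_left _ _).trans_lt ht1).trans_le ?_
      by_contra! hlt
      exact absurd (d.phi_pos_of_gt hN hsbar hy.1 hyy hy.2.2 hy2 hlt) hyc.le.not_gt
    · obtain ⟨t, ht1, ht2⟩ := exists_between (lt_min hl hm.2)
      have htb := ht2.trans_le (min_le_right _ _)
      have hta := hm.1.trans ht1
      have hpos := d.phi_pos_of_gt hN hsbar hx.1 h hx.2.2 htb ht1
      have hc := (d.phi_cont_ab hN t x hx).eventually (lt_mem_nhds hpos)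
      filter_upwards [hmem, hc, hf.eventually (gt_mem_nhds hta), hs.eventually (lt_mem_nhds htb)]
        with y hy hyc hy1 hy2
      have hyy : y.1 < y.2 := hy1.trans hy2
      have e : sExt sbar y = sbar y.1 y.2 := by simp [sExt, hyy]
      rw [e]
      refine lt_of_le_of_lt ?_ (ht2.trans_le (min_le_left _ _))
      by_contra! hlt
      exact absurd (d.phi_neg_of_lt hN hsbar hy.1 hyy hy.2.2 hy1 hlt) hyc.le.not_gt

/-! ### Continuity of `1 / K` along the reflection point -/

lemma sExt_Icc (hsbar : IsSBar d sbar) {x : ℝ × ℝ} (hx : x ∈ tri) :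
    sExt sbar x ∈ Icc (0:ℝ) 1 :=
  ⟨hx.1.trans (d.sExt_mem hsbar hx).1, (d.sExt_mem hsbar hx).2.trans hx.2.2⟩

/-- Reduces continuity of `1 / K(f, s̄)` to the corner `(0, 0)`, the only point where `ζ(s̄)` is
singular. -/
lemma inv_kF_cont (hN : 3 ≤ N) (hsbar : IsSBar d sbar) {f : ℝ × ℝ → ℝ} (hf : Continuous f)
    (hfm : MapsTo f tri (Icc 0 1)) (hf0 : f (0, 0) = 0)
    (h0 : Tendsto (fun x => d.pF (f x) * d.zeta (sExt sbar x)) (𝓝[tri] (0, 0)) (𝓝 0)) :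
    ContinuousOn (fun x => 1 / d.kF (f x) (sExt sbar x)) tri := by
  have hS := d.sExt_cont hN hsbar
  have hSm : MapsTo (sExt sbar) tri (Icc 0 1) := fun x hx => d.sExt_Icc hsbar hx
  have hp : ContinuousOn (fun x => d.pF (f x)) tri := (d.pF_cont hN).comp hf.continuousOn hfm
  have hq : ContinuousOn (fun x => d.qF (f x)) tri := (d.qF_cont hN).comp hf.continuousOn hfm
  have hx : ContinuousOn (fun x => d.xi (sExt sbar x)) tri := d.xi_cont.comp hS hSm
  have hpz : ContinuousOn (fun x => d.pF (f x) * d.zeta (sExt sbar x)) tri := by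
    intro x hxt
    rcases (hSm hxt).1.eq_or_lt with e | e
    · have := d.sExt_eq_zero hsbar hxt e.symm
      subst this
      rw [ContinuousWithinAt, hf0, d.pF_zero, zero_mul]
      exact h0
    · refine (hp x hxt).mul ?_
      have h1 : Tendsto (sExt sbar) (𝓝[tri] x) (𝓝[Ioc 0 1] (sExt sbar x)) := by
        refine tendsto_nhdsWithin_iff.mpr ⟨hS x hxt, ?_⟩
        filter_upwards [self_mem_nhdsWithin, (hS x hxt).eventually (lt_mem_nhds e)] with y hy hy0
        exact ⟨hy0, (hSm hy).2⟩
      exact (d.zeta_cont _ ⟨e, (hSm hxt).2⟩).tendsto.comp h1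
  have hk : ContinuousOn (fun x => d.kF (f x) (sExt sbar x)) tri := hpz.add (hq.mul hx)
  refine continuousOn_const.div hk ?_
  intro x hxt
  refine (d.kF_pos hN (hfm hxt) (hSm hxt) ?_).ne'
  intro e
  rw [d.sExt_eq_zero hsbar hxt e, hf0]

lemma zero_mem_tri : ((0:ℝ), (0:ℝ)) ∈ tri := by simp [tri]

lemma sExt_zero : sExt sbar (0, 0) = 0 := by simp [sExt]

/-- `p ζ = 1 - ξ Q` vanishes as the reflection point tends to `0`. -/
lemma psi_tendsto (hN : 3 ≤ N) (hsbar : IsSBar d sbar) :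
    Tendsto (fun x => 1 - d.xi (sExt sbar x) * d.qF (sExt sbar x)) (𝓝[tri] (0, 0)) (𝓝 0) := by
  have hSm : MapsTo (sExt sbar) tri (Icc 0 1) := fun x hx => d.sExt_Icc hsbar hx
  have h : ContinuousOn (fun s => 1 - d.xi s * d.qF s) (Icc 0 1) :=
    continuousOn_const.sub (d.xi_cont.mul (d.qF_cont hN))
  have := (h.comp (d.sExt_cont hN hsbar) hSm) (0, 0) zero_mem_tri
  simpa [ContinuousWithinAt, Function.comp_def, sExt_zero, d.xi_q_zero hN] using this

/-- Since `b ≤ s̄(b, c)` and `p` increases, `p(b) ζ(s̄) ≤ p(s̄) ζ(s̄)`. -/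
lemma inv_kF_fst (hN : 3 ≤ N) (hsbar : IsSBar d sbar) :
    ContinuousOn (fun x : ℝ × ℝ => 1 / d.kF x.1 (sExt sbar x)) tri := by
  refine d.inv_kF_cont hN hsbar continuous_fst
    (fun x hx => ⟨hx.1, hx.2.1.trans hx.2.2⟩) rfl ?_
  refine tendsto_of_tendsto_of_tendsto_of_le_of_le' tendsto_const_nhds
    (d.psi_tendsto hN hsbar) ?_ ?_
  all_goals
    filter_upwards [self_mem_nhdsWithin] with x hx
    have hS := d.sExt_Icc hsbar hx
    have hx1 : x.1 ∈ Icc (0:ℝ) 1 := ⟨hx.1, hx.2.1.trans hx.2.2⟩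
    rcases hS.1.eq_or_lt with e | e
    · rw [d.sExt_eq_zero hsbar hx e.symm]
      simp [sExt_zero, d.xi_q_zero hN, d.pF_zero]
    have hz := d.zeta_pos _ ⟨e, hS.2⟩
  · exact mul_nonneg (d.pF_nonneg hN hx1) hz.le
  · have h1 := d.wron ⟨e, hS.2⟩
    have h2 := (d.pF_mono hN).monotoneOn hx1 hS (d.sExt_mem hsbar hx).1
    nlinarith [mul_le_mul_of_nonneg_right h2 hz.le]

/-- The key quantitative consequence of the reflection law: writing `ψ = p ζ = 1 - ξ Q`, it bounds
`p(b) ζ(s̄)` by a multiple of `ψ(s̄)` once `ψ(s̄)` is small. The law is combined with the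
comparison `K_s(a, ·) / K(a, ·) ≤ ξ' / ξ`. -/
lemma reflection_bound (hN : 3 ≤ N) (hsbar : IsSBar d sbar) {x : ℝ × ℝ} (hx : x ∈ tri)
    (hS0 : 0 < sExt sbar x) :
    d.pF x.2 * d.zeta (sExt sbar x) * (1 - 2 * (1 - d.xi (sExt sbar x) * d.qF (sExt sbar x)))
      ≤ 2 * d.qF x.2 * d.xi (sExt sbar x) *
        (1 - d.xi (sExt sbar x) * d.qF (sExt sbar x)) := by
  have hS := d.sExt_Icc hsbar hx
  have hw := d.wron ⟨hS0, hS.2⟩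
  have hz := d.zeta_pos _ ⟨hS0, hS.2⟩
  have hxi := d.xi_pos _ hS
  rcases hx.2.1.eq_or_lt with h | h
  · have e : sExt sbar x = x.2 := by simp [sExt, h]
    rw [e] at hS hw hz ⊢
    have h1 := d.pF_nonneg hN hS
    have h2 : 0 ≤ d.pF x.2 * d.zeta x.2 := mul_nonneg h1 hz.le
    have h3 : d.xi x.2 * d.qF x.2 = 1 - d.pF x.2 * d.zeta x.2 := by linarith
    have h4 : 2 * d.qF x.2 * d.xi x.2 = 2 * (d.xi x.2 * d.qF x.2) := by ring
    rw [h4, h3]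
    nlinarith
  · have e : sExt sbar x = sbar x.1 x.2 := by simp [sExt, h]
    have hphi := d.phi_sbar hN hsbar hx.1 h hx.2.2
    rw [← e, d.phi_eq ⟨hS0, hS.2⟩] at hphi
    have hx1 : x.1 ∈ Icc (0:ℝ) 1 := ⟨hx.1, hx.2.1.trans hx.2.2⟩
    have hx2 : x.2 ∈ Icc (0:ℝ) 1 := ⟨hx.1.trans hx.2.1, hx.2.2⟩
    have hka := d.kF_pos hN hx1 hS (fun h => absurd h hS0.ne')
    have hkb := d.kF_pos hN hx2 hS (fun h => absurd h hS0.ne')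
    have hpa := d.pF_nonneg hN hx1
    set s := sExt sbar x
    have hL : d.xi s * (d.pF s * d.qF x.1 - d.pF x.1 * d.qF s) =
        d.pF s * d.kF x.1 s - d.pF x.1 := by
      rw [kF]; linear_combination (-d.pF x.1) * hw
    have hmain : 0 ≤ d.kF x.1 s * (d.kF x.2 s * d.pF s +
        d.xi s * (d.pF s * d.qF x.2 - d.pF x.2 * d.qF s)) := by
      have : d.kF x.1 s * (d.kF x.2 s * d.pF s +
        d.xi s * (d.pF s * d.qF x.2 - d.pF x.2 * d.qF s)) = d.kF x.2 s * d.pF x.1 := by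
        linear_combination d.xi s * hphi - d.kF x.2 s * hL
      rw [this]
      exact mul_nonneg hkb.le hpa
    have h2 := nonneg_of_mul_nonneg_right hmain hka
    have h3 := mul_nonneg h2 hz.le
    have hpz : d.pF s * d.zeta s = 1 - d.xi s * d.qF s := by linarith
    have h4 : (d.kF x.2 s * d.pF s +
        d.xi s * (d.pF s * d.qF x.2 - d.pF x.2 * d.qF s)) * d.zeta s =
        2 * d.qF x.2 * d.xi s * (1 - d.xi s * d.qF s) -
        d.pF x.2 * d.zeta s * (1 - 2 * (1 - d.xi s * d.qF s)) := by
      rw [kF]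
      linear_combination (d.pF x.2 * d.zeta s + 2 * d.qF x.2 * d.xi s) * hpz
    linarith

lemma inv_kF_snd (hN : 3 ≤ N) (hsbar : IsSBar d sbar) :
    ContinuousOn (fun x : ℝ × ℝ => 1 / d.kF x.2 (sExt sbar x)) tri := by
  refine d.inv_kF_cont hN hsbar continuous_snd
    (fun x hx => ⟨hx.1.trans hx.2.1, hx.2.2⟩) rfl ?_
  have hpsi := d.psi_tendsto hN hsbar
  have hSm : MapsTo (sExt sbar) tri (Icc 0 1) := fun x hx => d.sExt_Icc hsbar hx
  have hxq : Tendsto (fun x : ℝ × ℝ => 4 * d.qF x.2 * d.xi (sExt sbar x) *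
      (1 - d.xi (sExt sbar x) * d.qF (sExt sbar x))) (𝓝[tri] (0, 0)) (𝓝 0) := by
    have h1 := comp_snd (d.qF_cont hN) (0, 0) zero_mem_tri
    have h2 := (d.xi_cont.comp (d.sExt_cont hN hsbar) hSm) (0, 0) zero_mem_tri
    have h3 := ((tendsto_const_nhds (x := (4:ℝ))).mul h1.tendsto).mul h2.tendsto |>.mul hpsi
    rw [mul_zero] at h3
    exact h3
  refine tendsto_of_tendsto_of_tendsto_of_le_of_le' tendsto_const_nhds hxq ?_ ?_
  all_goals
    filter_upwards [self_mem_nhdsWithin, hpsi.eventually (gt_mem_nhds (show (0:ℝ) < 1/4 by norm_num))]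
      with x hx hpx
    have hS := d.sExt_Icc hsbar hx
    have hx2 : x.2 ∈ Icc (0:ℝ) 1 := ⟨hx.1.trans hx.2.1, hx.2.2⟩
    rcases hS.1.eq_or_lt with e | e
    · rw [d.sExt_eq_zero hsbar hx e.symm]
      simp [sExt_zero, d.xi_q_zero hN, d.pF_zero]
    have hz := d.zeta_pos _ ⟨e, hS.2⟩
    have hpz := mul_nonneg (d.pF_nonneg hN hx2) hz.le
  · exact hpz
  · have := d.reflection_bound hN hsbar hx e
    nlinarith

end GreenData

/-! ### The simplex -/

open GreenData

lemma extendB_cont (k j : ℕ) : Continuous (fun β : Fin (k - 1) → ℝ => extendB k β j) := by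
  unfold extendB
  split_ifs
  · exact continuous_apply _
  · exact continuous_const
  · exact continuous_const

lemma extendB_le_of_closure {k : ℕ} {β : Fin (k - 1) → ℝ} (hβ : β ∈ closure (TSet k)) {j : ℕ}
    (hj : j < k) : extendB k β j ≤ extendB k β (j + 1) := by
  have hc : IsClosed {β : Fin (k - 1) → ℝ | extendB k β j ≤ extendB k β (j + 1)} :=
    isClosed_le (extendB_cont k j) (extendB_cont k (j + 1))
  exact closure_minimal (fun β (hβ : β ∈ TSet k) => (hβ j hj).le) hc hβ

lemma extendB_nonneg {k : ℕ} {β : Fin (k - 1) → ℝ} (hβ : β ∈ closure (TSet k)) {j : ℕ}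
    (hj : j ≤ k) : 0 ≤ extendB k β j := by
  induction j with
  | zero => simp [extendB]
  | succ j ih => exact (ih (by omega)).trans (extendB_le_of_closure hβ hj)

lemma extendB_le_one {k : ℕ} (hk : 2 ≤ k) {β : Fin (k - 1) → ℝ} (hβ : β ∈ closure (TSet k))
    {j : ℕ} (hj : j ≤ k) : extendB k β j ≤ 1 := by
  induction hj using Nat.decreasingInduction with
  | of_succ j h ih => exact (extendB_le_of_closure hβ h).trans ih
  | self =>
    have h1 : ¬ (1 ≤ k ∧ k ≤ k - 1) := by omega
    have h2 : k ≠ 0 := by omega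
    simp [extendB, h1, h2]

lemma extendB_mem_tri {k : ℕ} (hk : 2 ≤ k) {β : Fin (k - 1) → ℝ} (hβ : β ∈ closure (TSet k))
    {j : ℕ} (hj : j < k) : (extendB k β j, extendB k β (j + 1)) ∈ tri :=
  ⟨extendB_nonneg hβ hj.le, extendB_le_of_closure hβ hj, extendB_le_one hk hβ hj⟩

lemma comp_extendB {k : ℕ} (hk : 2 ≤ k) {F : ℝ × ℝ → ℝ} (hF : ContinuousOn F tri) {j : ℕ}
    (hj : j < k) :
    ContinuousOn (fun β : Fin (k - 1) → ℝ => F (extendB k β j, extendB k β (j + 1)))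
      (closure (TSet k)) :=
  ContinuousOn.comp (g := F) (t := tri) hF
    ((extendB_cont k j).prodMk (extendB_cont k (j + 1))).continuousOn
    (fun _ hβ => extendB_mem_tri hk hβ hj)

/-- `M_∞^{(j+1)}` in terms of `K`. -/
lemma Minf_eq {N : ℕ} (d : GreenData N) (sbar : ℝ → ℝ → ℝ) {β : ℕ → ℝ} {j : ℕ}
    (h0 : 0 ≤ β j) (h1 : β j < β (j + 1)) (h2 : β (j + 1) < β (j + 1 + 1)) :
    Minf d sbar β (j + 1) =
      1 / d.kF (β (j + 1)) (sExt sbar (β (j + 1), β (j + 1 + 1))) -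
      1 / d.kF (β (j + 1)) (sExt sbar (β j, β (j + 1))) := by
  have hb : 0 < β (j + 1) := h0.trans_lt h1
  have key : ∀ r, d.kF (β (j + 1)) r = β (j + 1) ^ (N - 1) *
      (deriv d.xi (β (j + 1)) * d.zeta r - d.xi r * deriv d.zeta (β (j + 1))) := by
    intro r; rw [kF, d.qF_of_ne hb.ne', pF]; ring
  simp only [Minf, sExt, h1, h2, if_true, key, Nat.add_sub_cancel, one_div, mul_inv]
  ring

theorem statement9 {N : ℕ} (hN : 3 ≤ N) (d : GreenData N)
    (sbar : ℝ → ℝ → ℝ) (hsbar : IsSBar d sbar) (k : ℕ) (hk : 2 ≤ k) :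
    ContinuousOn
      (fun β : Fin (k - 1) → ℝ => fun j : Fin (k - 1) =>
        Minf d sbar (extendB k β) ((j : ℕ) + 1))
      (TSet k) ∧
    ∃ Mbar : (Fin (k - 1) → ℝ) → (Fin (k - 1) → ℝ),
      ContinuousOn Mbar (closure (TSet k)) ∧
      ∀ β ∈ TSet k, Mbar β =
        fun j : Fin (k - 1) => Minf d sbar (extendB k β) ((j : ℕ) + 1) := by
  have hcont : ContinuousOn (fun β : Fin (k - 1) → ℝ => fun j : Fin (k - 1) =>
      1 / d.kF (extendB k β (j + 1))
        (sExt sbar (extendB k β (j + 1), extendB k β (j + 1 + 1))) -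
      1 / d.kF (extendB k β (j + 1)) (sExt sbar (extendB k β j, extendB k β (j + 1))))
      (closure (TSet k)) := by
    refine continuousOn_pi.mpr fun j => ?_
    have hj := j.2
    refine ContinuousOn.sub ?_ ?_
    · exact comp_extendB hk (d.inv_kF_fst hN hsbar) (show (j : ℕ) + 1 < k by omega)
    · exact comp_extendB hk (d.inv_kF_snd hN hsbar) (show (j : ℕ) < k by omega)
  have heq : ∀ β ∈ TSet k, ∀ j : Fin (k - 1), Minf d sbar (extendB k β) ((j : ℕ) + 1) =
      1 / d.kF (extendB k β (j + 1))
        (sExt sbar (extendB k β (j + 1), extendB k β (j + 1 + 1))) -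
      1 / d.kF (extendB k β (j + 1)) (sExt sbar (extendB k β j, extendB k β (j + 1))) := by
    intro β hβ j
    have hj := j.2
    exact Minf_eq d sbar (extendB_nonneg (subset_closure hβ) (by omega)) (hβ _ (by omega))
      (hβ _ (by omega))
  refine ⟨(hcont.mono subset_closure).congr ?_, _, hcont, ?_⟩
  · intro β hβ
    funext j
    exact heq β hβ j
  · intro β hβ
    funext j
    exact (heq β hβ j).symm
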